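/- Let G be a 2-connected simple graph of order n. Then α(G) ≥ α(C_n), where C_n is the cycle on n vertices; i.e., among all 2-connected graphs of order n, the cycle has minimum algebraic connectivity. -/

import Mathlib

open Matrix SimpleGraph

/-- The algebraic connectivity of `G`: the infimum of the Rayleigh quotients of the
Laplacian matrix over nonzero vectors orthogonal to the all-ones vector.  For a graph on
at least two vertices this is the second smallest eigenvalue of the Laplacian. -/
noncomputable def algCon {V : Type*} [Fintype V] [DecidableEq V] (G : SimpleGraph V) : ℝ :=
  letI := Classical.decRel G.Adj
  sInf { r : ℝ | ∃ x : V → ℝ, x ≠ 0 ∧ (∑ v, x v) = 0 ∧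
    r = (x ⬝ᵥ (G.lapMatrix ℝ *ᵥ x)) / (∑ v, (x v) ^ 2) }

/-- A graph is 2-connected if it has at least two vertices and every pair of distinct
vertices is joined by (at least) two internally disjoint paths. -/
def TwoConnected {V : Type*} (G : SimpleGraph V) : Prop :=
  (∃ u v : V, u ≠ v) ∧ ∀ u v : V, u ≠ v → ∃ p q : G.Walk u v, p.IsPath ∧ q.IsPath ∧
    ∀ w, w ∈ p.support → w ∈ q.support → w = u ∨ w = v

/-!
Sort the vertices along a vector `x`. Telescoping over the gaps of `x`, the Dirichlet energy of `x`
becomes a nonnegative combination of the numbers of edges crossing two given gaps. In a 2-connected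
graph on at least three vertices every gap is crossed by two edges, and any two consecutive gaps
are crossed by a common edge, since some edge avoids the vertex between them. The cycle that visits
the sorted vertices in the order `0, 2, 4, …, 5, 3, 1` attains these minima and has no edge
crossing two non-consecutive gaps, so its energy at `x` is at most that of the given graph.
-/

section Energy

variable {V W : Type*} [Fintype V] [DecidableEq V] [Fintype W] [DecidableEq W]
  (G : SimpleGraph V) [DecidableRel G.Adj] (H : SimpleGraph W) [DecidableRel H.Adj]

/-- The Dirichlet energy of `x` on `G`, i.e. the quadratic form of the Laplacian of `G`. It is the
numerator of the Rayleigh quotients in `algCon`. -/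
noncomputable def dirichletEnergy (x : V → ℝ) : ℝ :=
  x ⬝ᵥ (G.lapMatrix ℝ *ᵥ x)

lemma dirichletEnergy_eq_sum (x : V → ℝ) :
    dirichletEnergy G x = (∑ u, ∑ v, if G.Adj u v then (x u - x v) ^ 2 else 0) / 2 := by
  rw [dirichletEnergy, ← lapMatrix_toLinearMap₂', toLinearMap₂'_apply']

lemma dirichletEnergy_nonneg (x : V → ℝ) : 0 ≤ dirichletEnergy G x := by
  rw [dirichletEnergy_eq_sum]
  positivity

variable {G H} in
lemma dirichletEnergy_comp_iso (e : G ≃g H) (x : W → ℝ) :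
    dirichletEnergy G (x ∘ e) = dirichletEnergy H x := by
  simp only [dirichletEnergy_eq_sum, ← e.toEquiv.sum_comp, Function.comp_apply,
    RelIso.coe_fn_toEquiv, e.map_adj_iff]

lemma dirichletEnergy_eq_sum_lt [LinearOrder V] (x : V → ℝ) :
    dirichletEnergy G x = ∑ p : V × V with G.Adj p.1 p.2 ∧ p.1 < p.2, (x p.1 - x p.2) ^ 2 := by
  have swap : ∑ p : V × V with G.Adj p.1 p.2 ∧ ¬p.1 < p.2, (x p.1 - x p.2) ^ 2 =
      ∑ p : V × V with G.Adj p.1 p.2 ∧ p.1 < p.2, (x p.1 - x p.2) ^ 2 := by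
    refine Finset.sum_equiv (Equiv.prodComm V V) (fun p => ?_) fun p _ => sub_sq_comm _ _
    simp only [Finset.mem_filter_univ, Equiv.prodComm_apply, Prod.fst_swap, Prod.snd_swap,
      G.adj_comm p.2 p.1, not_lt]
    exact and_congr_right fun h => ⟨fun hle => hle.lt_of_ne h.ne', le_of_lt⟩
  rw [dirichletEnergy_eq_sum,
    ← Fintype.sum_prod_type' (f := fun u v => if G.Adj u v then (x u - x v) ^ 2 else 0),
    ← Finset.sum_filter, ← Finset.sum_filter_add_sum_filter_not _ fun p : V × V => p.1 < p.2,
    Finset.filter_filter, Finset.filter_filter, swap, add_self_div_two]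

lemma algCon_eq_sInf : algCon G = sInf { r : ℝ | ∃ x : V → ℝ, x ≠ 0 ∧ ∑ v, x v = 0 ∧
    r = dirichletEnergy G x / ∑ v, x v ^ 2 } := by
  unfold algCon dirichletEnergy
  congr!

lemma algCon_le_div {x : V → ℝ} (hx : x ≠ 0) (hsum : ∑ v, x v = 0) :
    algCon G ≤ dirichletEnergy G x / ∑ v, x v ^ 2 := by
  rw [algCon_eq_sInf]
  refine csInf_le ⟨0, ?_⟩ ⟨x, hx, hsum, rfl⟩
  rintro r ⟨y, -, -, rfl⟩
  exact div_nonneg (dirichletEnergy_nonneg G y) (by positivity)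

lemma le_algCon [Nontrivial V] {r : ℝ}
    (h : ∀ x : V → ℝ, x ≠ 0 → ∑ v, x v = 0 → r ≤ dirichletEnergy G x / ∑ v, x v ^ 2) :
    r ≤ algCon G := by
  rw [algCon_eq_sInf]
  refine le_csInf ?_ ?_
  · obtain ⟨u, v, huv⟩ := exists_pair_ne V
    refine ⟨_, Pi.single u 1 - Pi.single v 1, fun h0 => ?_, ?_, rfl⟩
    · simpa [huv] using congrFun h0 u
    · simp
  · rintro r ⟨x, hx, hsum, rfl⟩
    exact h x hx hsum

variable {G H} in
theorem algCon_le_algCon_of_dirichletEnergy_comp_le [Nontrivial V]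
    (h : ∀ x : V → ℝ, ∃ e : W ≃ V, dirichletEnergy H (x ∘ e) ≤ dirichletEnergy G x) :
    algCon H ≤ algCon G := by
  refine le_algCon G fun x hx hsum => ?_
  obtain ⟨e, he⟩ := h x
  have hne : x ∘ e ≠ 0 := fun h0 => hx (funext fun v => by simpa using congrFun h0 (e.symm v))
  calc algCon H
      ≤ dirichletEnergy H (x ∘ e) / ∑ w, (x ∘ e) w ^ 2 :=
        algCon_le_div H hne ((e.sum_comp x).trans hsum)
    _ = dirichletEnergy H (x ∘ e) / ∑ v, x v ^ 2 := by rw [← e.sum_comp fun v => x v ^ 2]; rfl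
    _ ≤ dirichletEnergy G x / ∑ v, x v ^ 2 := by gcongr

end Energy

lemma exists_equiv_fin_monotone_comp {V α : Type*} [Fintype V] [LinearOrder α] (x : V → α) :
    ∃ f : Fin (Fintype.card V) ≃ V, Monotone (x ∘ f) :=
  let f := (Fintype.equivFin V).symm
  ⟨(Tuple.sort (x ∘ f)).trans f, Tuple.monotone_sort (x ∘ f)⟩

lemma exists_monotone_nat_extension {α : Type*} [Preorder α] [Nonempty α] {n : ℕ}
    {x : Fin n → α} (hx : Monotone x) :
    ∃ y : ℕ → α, Monotone y ∧ ∀ i : Fin n, y i = x i := by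
  cases n with
  | zero => exact ⟨fun _ => Classical.arbitrary α, monotone_const, finZeroElim⟩
  | succ n =>
    exact ⟨fun k => x ⟨min k n, by omega⟩,
      fun a b hab => hx (Fin.mk_le_mk.2 (min_le_min_right n hab)),
      fun i => congrArg x (Fin.ext (min_eq_left (Nat.le_of_lt_succ i.isLt)))⟩

lemma sq_sub_eq_sum_gaps {R : Type*} [CommRing R] (y : ℕ → R) {a b n : ℕ} (hab : a ≤ b)
    (hbn : b ≤ n) :
    (y a - y b) ^ 2 = ∑ k ∈ Finset.range n, ∑ l ∈ Finset.range n,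
      if k ∈ Finset.Ico a b ∧ l ∈ Finset.Ico a b then
        (y (k + 1) - y k) * (y (l + 1) - y l) else 0 := by
  rw [sub_sq_comm, ← Finset.sum_Ico_sub y hab, sq, Finset.sum_mul_sum, ← Finset.sum_product',
    ← Finset.sum_product', ← Finset.sum_filter]
  congr 1
  ext ⟨k, l⟩
  simp only [Finset.mem_product, Finset.mem_filter, Finset.mem_range, Finset.mem_Ico]
  omega

section Crossings

variable {n : ℕ} (G H : SimpleGraph (Fin n)) [DecidableRel G.Adj] [DecidableRel H.Adj]

/-- The edges of `G`, written as increasing pairs, that cross both the gap between `k` and `k + 1`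
and the gap between `l` and `l + 1`. -/
def crossings (k l : ℕ) : Finset (Fin n × Fin n) :=
  {p | G.Adj p.1 p.2 ∧ (p.1 ≤ k ∧ k < p.2) ∧ (p.1 ≤ l ∧ l < p.2)}

variable {G} in
lemma mem_crossings {k l : ℕ} {p : Fin n × Fin n} :
    p ∈ crossings G k l ↔ G.Adj p.1 p.2 ∧ (p.1 ≤ k ∧ k < p.2) ∧ (p.1 ≤ l ∧ l < p.2) :=
  Finset.mem_filter_univ p

lemma crossings_comm (k l : ℕ) : crossings G k l = crossings G l k := by
  simp only [crossings, and_comm]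

lemma card_crossings_le_one_of_le_two (hn : n ≤ 2) (k l : ℕ) : (crossings G k l).card ≤ 1 := by
  refine Finset.card_le_one.2 fun p hp q hq => ?_
  obtain ⟨-, hpk, -⟩ := mem_crossings.1 hp
  obtain ⟨-, hqk, -⟩ := mem_crossings.1 hq
  simp only [Prod.ext_iff, Fin.ext_iff]
  omega

lemma dirichletEnergy_eq_sum_crossings (y : ℕ → ℝ) :
    dirichletEnergy G (fun i => y i) = ∑ k ∈ Finset.range n, ∑ l ∈ Finset.range n,
      ((crossings G k l).card : ℝ) * ((y (k + 1) - y k) * (y (l + 1) - y l)) := by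
  rw [dirichletEnergy_eq_sum_lt, Finset.sum_congr rfl fun p hp =>
    sq_sub_eq_sum_gaps y (Finset.mem_filter.1 hp).2.2.le p.2.isLt.le, Finset.sum_comm]
  refine Finset.sum_congr rfl fun k _ => ?_
  rw [Finset.sum_comm]
  refine Finset.sum_congr rfl fun l _ => ?_
  rw [← Finset.sum_filter, Finset.sum_const, nsmul_eq_mul, Finset.filter_filter]
  congr 3
  ext p
  simp only [mem_crossings, Finset.mem_filter_univ, Finset.mem_Ico]
  exact ⟨fun ⟨⟨hadj, _⟩, hkl⟩ => ⟨hadj, hkl⟩,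
    fun ⟨hadj, hk, hl⟩ => ⟨⟨hadj, Fin.lt_def.2 (hk.1.trans_lt hk.2)⟩, hk, hl⟩⟩

variable {G H} in
theorem dirichletEnergy_le_of_card_crossings_le
    (h : ∀ k l, (crossings H k l).card ≤ (crossings G k l).card) {x : Fin n → ℝ}
    (hx : Monotone x) : dirichletEnergy H x ≤ dirichletEnergy G x := by
  obtain ⟨y, hy, hyx⟩ := exists_monotone_nat_extension hx
  have hgap (k : ℕ) : 0 ≤ y (k + 1) - y k := sub_nonneg.2 (hy k.le_succ)
  rw [← funext hyx, dirichletEnergy_eq_sum_crossings, dirichletEnergy_eq_sum_crossings]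
  refine Finset.sum_le_sum fun k _ => Finset.sum_le_sum fun l _ => ?_
  exact mul_le_mul_of_nonneg_right (mod_cast h k l) (mul_nonneg (hgap k) (hgap l))

end Crossings

namespace TwoConnected

variable {V W : Type*} {G : SimpleGraph V} {A : Set V} {u v : V}

lemma nontrivial (hG : TwoConnected G) : Nontrivial V :=
  ⟨hG.1⟩

lemma of_iso {H : SimpleGraph W} (hG : TwoConnected G) (e : G ≃g H) : TwoConnected H := by
  obtain ⟨⟨u, v, huv⟩, hpaths⟩ := hG
  refine ⟨⟨e u, e v, e.injective.ne huv⟩, fun a b hab => ?_⟩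
  obtain ⟨a, rfl⟩ := e.surjective a
  obtain ⟨b, rfl⟩ := e.surjective b
  obtain ⟨p, q, hp, hq, hpq⟩ := hpaths a b (ne_of_apply_ne e hab)
  refine ⟨p.map e.toHom, q.map e.toHom, hp.map e.injective,
    hq.map e.injective, fun w hwp hwq => ?_⟩
  rw [Walk.support_map, List.mem_map] at hwp hwq
  obtain ⟨w, hwp, rfl⟩ := hwp
  obtain ⟨w', hwq, hw'⟩ := hwq
  rw [e.injective hw'] at hwq
  exact (hpq w hwp hwq).imp (congrArg e) (congrArg e)

lemma preconnected (hG : TwoConnected G) : G.Preconnected := fun u v => by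
  obtain rfl | huv := eq_or_ne u v
  · rfl
  · exact (hG.2 u v huv).elim fun p _ => p.reachable

lemma exists_walk_notMem_support (hG : TwoConnected G) {c : V} (huc : u ≠ c) (hvc : v ≠ c) :
    ∃ p : G.Walk u v, c ∉ p.support := by
  obtain rfl | huv := eq_or_ne u v
  · exact ⟨.nil, by simpa using huc.symm⟩
  obtain ⟨p, q, -, -, hpq⟩ := hG.2 u v huv
  by_contra! hmem
  exact (hpq c (hmem p) (hmem q)).elim huc.symm hvc.symm

lemma exists_adj_boundary_avoiding (hG : TwoConnected G) {c : V} (hu : u ∈ A) (hv : v ∉ A)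
    (huc : u ≠ c) (hvc : v ≠ c) : ∃ a ∈ A, ∃ b ∉ A, G.Adj a b ∧ a ≠ c ∧ b ≠ c := by
  obtain ⟨p, hp⟩ := hG.exists_walk_notMem_support huc hvc
  obtain ⟨d, hd, hfst, hsnd⟩ := p.exists_boundary_dart A hu hv
  exact ⟨d.fst, hfst, d.snd, hsnd, d.adj,
    ne_of_mem_of_not_mem (p.dart_fst_mem_support_of_mem_darts hd) hp,
    ne_of_mem_of_not_mem (p.dart_snd_mem_support_of_mem_darts hd) hp⟩

lemma exists_adj_boundary_ne (hG : TwoConnected G) (hu : u ∈ A) (hv : v ∉ A) {w : V} (hwu : w ≠ u)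
    (hwv : w ≠ v) : ∃ a ∈ A, ∃ b ∉ A, G.Adj a b ∧ (a, b) ≠ (u, v) := by
  have huv := ne_of_mem_of_not_mem hu hv
  -- Of `u` and `v`, avoid the one on the same side of the cut as `w`; `w` takes over its role.
  by_cases hw : w ∈ A
  · obtain ⟨a, ha, b, hb, hab, hau, -⟩ := hG.exists_adj_boundary_avoiding hw hv hwu huv.symm
    exact ⟨a, ha, b, hb, hab, fun h => hau (congrArg Prod.fst h)⟩
  · obtain ⟨a, ha, b, hb, hab, -, hbv⟩ := hG.exists_adj_boundary_avoiding hu hw huv hwv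
    exact ⟨a, ha, b, hb, hab, fun h => hbv (congrArg Prod.snd h)⟩

end TwoConnected

section CrossingLowerBounds

variable {n k : ℕ} {G : SimpleGraph (Fin n)} [DecidableRel G.Adj]

lemma crossings_self_nonempty (hG : G.Preconnected) (hk : k + 1 < n) :
    (crossings G k k).Nonempty := by
  obtain ⟨p⟩ := hG ⟨k, by omega⟩ ⟨k + 1, hk⟩
  obtain ⟨d, -, hfst, hsnd⟩ := p.exists_boundary_dart {i | (i : ℕ) ≤ k} (by simp) (by simp)
  have hcross : (d.fst : ℕ) ≤ k ∧ k < d.snd := ⟨hfst, not_le.1 hsnd⟩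
  exact ⟨d.toProd, mem_crossings.2 ⟨d.adj, hcross, hcross⟩⟩

lemma TwoConnected.two_le_card_crossings_self (hG : TwoConnected G) (hn : 2 < n)
    (hk : k + 1 < n) : 2 ≤ (crossings G k k).card := by
  obtain ⟨⟨a, b⟩, hab⟩ := crossings_self_nonempty hG.preconnected hk
  obtain ⟨-, hcross, -⟩ := mem_crossings.1 hab
  obtain ⟨w, hwa, hwb⟩ : ∃ w, w ≠ a ∧ w ≠ b := Fin.exists_ne_and_ne_of_two_lt a b hn
  obtain ⟨c, hc, d, hd, hcd, hne⟩ := hG.exists_adj_boundary_ne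
    (A := {i : Fin n | (i : ℕ) ≤ k}) hcross.1 (not_le.2 hcross.2) hwa hwb
  have hcross' : (c : ℕ) ≤ k ∧ k < d := ⟨hc, not_le.1 hd⟩
  exact Finset.one_lt_card.2
    ⟨_, mem_crossings.2 ⟨hcd, hcross', hcross'⟩, _, hab, hne⟩

lemma TwoConnected.crossings_succ_nonempty (hG : TwoConnected G) (hk : k + 2 < n) :
    (crossings G k (k + 1)).Nonempty := by
  obtain ⟨a, ha, b, hb, hab, -, hne⟩ := hG.exists_adj_boundary_avoiding
    (A := {i : Fin n | (i : ℕ) ≤ k})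
    (u := ⟨k, by omega⟩) (v := ⟨k + 2, hk⟩) (c := ⟨k + 1, by omega⟩)
    (by simp) (by simp) (by simp) (by simp)
  have hcross : (a : ℕ) ≤ k ∧ k < b := ⟨ha, not_le.1 hb⟩
  exact ⟨(a, b), mem_crossings.2 ⟨hab, hcross, hcross.1.trans k.le_succ,
    (Nat.succ_le_of_lt hcross.2).lt_of_ne' (Fin.val_ne_of_ne hne)⟩⟩

end CrossingLowerBounds

section Zigzag

/-- The position of each vertex on the cycle that visits `Fin n` in the order
`0, 2, 4, …, 5, 3, 1`: the even vertices come first, the odd ones on the way back. -/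
noncomputable def zigzag (n : ℕ) : Equiv.Perm (Fin n) :=
  Equiv.ofBijective
    (fun i => ⟨if (i : ℕ) % 2 = 0 then i / 2 else n - 1 - i / 2, by split_ifs <;> omega⟩)
    (Finite.injective_iff_bijective.1 fun i j hij => by
      rw [Fin.mk.injEq] at hij
      apply Fin.ext
      split_ifs at hij <;> omega)

/-- The cycle through the vertices `0, 2, 4, …, 5, 3, 1` of `Fin n` in this order. Among the
2-connected graphs on `Fin n` it has the fewest `crossings`. -/
noncomputable abbrev zigzagCycle (n : ℕ) : SimpleGraph (Fin n) :=
  (cycleGraph n).comap (zigzag n)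

variable {n : ℕ}

lemma val_zigzag (i : Fin n) :
    (zigzag n i : ℕ) = if (i : ℕ) % 2 = 0 then (i : ℕ) / 2 else n - 1 - i / 2 :=
  rfl

lemma val_eq_of_cycleGraph_adj {i j : Fin n} (h : (cycleGraph n).Adj i j) (hij : i < j) :
    (j : ℕ) = i + 1 ∨ (i : ℕ) = 0 ∧ (j : ℕ) + 1 = n := by
  rw [cycleGraph_adj', Fin.coe_sub_iff_lt.2 hij, Fin.coe_sub_iff_le.2 hij.le] at h
  omega

lemma val_eq_of_zigzagCycle_adj {i j : Fin n} (h : (zigzagCycle n).Adj i j) (hij : i < j) :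
    (j : ℕ) = i + 2 ∨ (j : ℕ) = i + 1 ∧ ((i : ℕ) = 0 ∨ (j : ℕ) + 1 = n) := by
  rw [comap_adj] at h
  have hi := val_zigzag i
  have hj := val_zigzag j
  rcases lt_or_gt_of_ne h.ne with hlt | hlt
  · have := val_eq_of_cycleGraph_adj h hlt
    rw [Fin.lt_def] at hij hlt
    split_ifs at hi hj <;> omega
  · have := val_eq_of_cycleGraph_adj h.symm hlt
    rw [Fin.lt_def] at hij hlt
    split_ifs at hi hj <;> omega

variable [DecidableRel (zigzagCycle n).Adj]

lemma val_of_mem_crossings_zigzagCycle {k l : ℕ} {p : Fin n × Fin n}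
    (hp : p ∈ crossings (zigzagCycle n) k l) :
    ((p.2 : ℕ) = p.1 + 2 ∨ (p.2 : ℕ) = p.1 + 1 ∧ ((p.1 : ℕ) = 0 ∨ (p.2 : ℕ) + 1 = n)) ∧
      ((p.1 : ℕ) ≤ k ∧ k < p.2) ∧ ((p.1 : ℕ) ≤ l ∧ l < p.2) := by
  obtain ⟨hadj, hk, hl⟩ := mem_crossings.1 hp
  exact ⟨val_eq_of_zigzagCycle_adj hadj (Fin.lt_def.2 (hk.1.trans_lt hk.2)), hk, hl⟩

lemma card_crossings_zigzagCycle_self_le_two (k : ℕ) :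
    (crossings (zigzagCycle n) k k).card ≤ 2 := by
  by_contra! hcard
  obtain ⟨p, q, r, hp, hq, hr, hpq, hpr, hqr⟩ := Finset.two_lt_card_iff.1 hcard
  have := val_of_mem_crossings_zigzagCycle hp
  have := val_of_mem_crossings_zigzagCycle hq
  have := val_of_mem_crossings_zigzagCycle hr
  simp only [ne_eq, Prod.ext_iff, Fin.ext_iff] at hpq hpr hqr
  omega

lemma card_crossings_zigzagCycle_succ_le_one (k : ℕ) :
    (crossings (zigzagCycle n) k (k + 1)).card ≤ 1 := by
  refine Finset.card_le_one.2 fun p hp q hq => ?_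
  have := val_of_mem_crossings_zigzagCycle hp
  have := val_of_mem_crossings_zigzagCycle hq
  simp only [Prod.ext_iff, Fin.ext_iff]
  omega

theorem TwoConnected.card_crossings_zigzagCycle_le {G : SimpleGraph (Fin n)} [DecidableRel G.Adj]
    (hG : TwoConnected G) (k l : ℕ) :
    (crossings (zigzagCycle n) k l).card ≤ (crossings G k l).card := by
  wlog hkl : k ≤ l generalizing k l
  · simpa only [crossings_comm _ k l] using this l k (le_of_not_ge hkl)
  obtain hempty | ⟨p, hp⟩ := (crossings (zigzagCycle n) k l).eq_empty_or_nonempty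
  · simp [hempty]
  have hval := val_of_mem_crossings_zigzagCycle hp
  have := p.2.isLt
  obtain rfl | rfl : l = k ∨ l = k + 1 := by omega
  · obtain hn | hn : n ≤ 2 ∨ 2 < n := le_or_gt n 2
    · exact (card_crossings_le_one_of_le_two _ hn l l).trans
        (crossings_self_nonempty hG.preconnected (by omega)).card_pos
    · exact (card_crossings_zigzagCycle_self_le_two l).trans
        (hG.two_le_card_crossings_self hn (by omega))
  · exact (card_crossings_zigzagCycle_succ_le_one k).trans
      (hG.crossings_succ_nonempty (by omega)).card_pos

end Zigzag

theorem algCon_twoConnected_ge_cycle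
    {V : Type*} [Fintype V] [DecidableEq V] {n : ℕ}
    (G : SimpleGraph V) (hcard : Fintype.card V = n) (hG : TwoConnected G) :
    algCon G ≥ algCon (SimpleGraph.cycleGraph n) := by
  classical
  subst hcard
  have := hG.nontrivial
  refine algCon_le_algCon_of_dirichletEnergy_comp_le fun x => ?_
  obtain ⟨f, hf⟩ := exists_equiv_fin_monotone_comp x
  let C := cycleGraph (Fintype.card V)
  let z := Iso.comap (zigzag (Fintype.card V)) C
  refine ⟨z.symm.toEquiv.trans f, ?_⟩
  calc dirichletEnergy C ((x ∘ f) ∘ z.symm)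
      = dirichletEnergy (zigzagCycle (Fintype.card V)) (x ∘ f) :=
        dirichletEnergy_comp_iso z.symm (x ∘ f)
    _ ≤ dirichletEnergy (G.comap f) (x ∘ f) :=
        dirichletEnergy_le_of_card_crossings_le
          (hG.of_iso (Iso.comap f G).symm).card_crossings_zigzagCycle_le hf
    _ = dirichletEnergy G x := dirichletEnergy_comp_iso (Iso.comap f G) x
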